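/- Let G be a finite multigraph in which every vertex has even degree (i.e., G is an Eulerian multigraph, not necessarily connected), and let U be the set of vertices that have odd degree with respect to some edge subset F ⊆ E of another multigraph on the same vertex set. If every connected component of G contains an even number of vertices of U, then the edge set of G can be partitioned into two edge sets J₁ and J₂ such that each Jᵢ, viewed as a multigraph on V, has odd degree exactly at the vertices of U (i.e., each Jᵢ is a U-join). Consequently min(w(J₁), w(J₂)) ≤ w(E(G))/2 for any nonnegative edge weights w. -/

import Mathlib

open scoped Classical

noncomputable def deg {V : Type*} (E : Multiset (Sym2 V)) (v : V) : ℕ :=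
  (E.filter (fun e => v ∈ e)).card

def Connects {V : Type*} (E : Multiset (Sym2 V)) : V → V → Prop :=
  Relation.ReflTransGen (fun a b => s(a, b) ∈ E)

noncomputable def mweight {V : Type*} (w : Sym2 V → ℝ) (E : Multiset (Sym2 V)) : ℝ :=
  (E.map w).sum

def IsMetric {V : Type*} (w : Sym2 V → ℝ) : Prop :=
  (∀ e, 0 ≤ w e) ∧ ∀ a b c : V, w s(a, c) ≤ w s(a, b) + w s(b, c)

def IsTour {V : Type*} (D : Finset V) (T : Multiset (Sym2 V)) : Prop :=
  (∀ e ∈ T, ¬ Sym2.IsDiag e) ∧ (∀ v, Even (deg T v)) ∧ ∀ v, ∃ d ∈ D, Connects T v d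

def IsCSF {V : Type*} (D : Finset V) (F : Finset (Sym2 V)) : Prop :=
  (∀ e ∈ F, ¬ Sym2.IsDiag e) ∧
  (SimpleGraph.fromEdgeSet (↑F : Set (Sym2 V))).IsAcyclic ∧
  ∀ v, ∃ d ∈ D, Connects F.val v d

def IsPM {V : Type*} (U : Finset V) (M : Multiset (Sym2 V)) : Prop :=
  (∀ e ∈ M, ¬ Sym2.IsDiag e) ∧ ∀ v, deg M v = if v ∈ U then 1 else 0

def IsRPPSol {V : Type*} (R J : Multiset (Sym2 V)) : Prop :=
  (∀ e ∈ J, ¬ Sym2.IsDiag e) ∧ (∀ v, Even (deg (R + J) v)) ∧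
  ∀ u v : V, (∃ e ∈ R + J, u ∈ e) → (∃ e ∈ R + J, v ∈ e) → Connects (R + J) u v

/-!
Over `𝔽₂`, the degree-parity vectors of the submultigraphs of `E` form a subgroup of `V → 𝔽₂`:
the parity vector of the symmetric difference of two submultigraphs is the sum of theirs.
Telescoping along a walk, this subgroup contains `δ_a + δ_b` whenever `a` and `b` are connected.
Choose a root `r u` in each component; since every component meets `U` evenly,
`∑_{u ∈ U} δ_{r u} = 0`, so `𝟙_U = ∑_{u ∈ U} (δ_u + δ_{r u})` is the parity vector of some `J ≤ E`.
When all degrees of `E` are even, the complement `E - J` has the same parity vector.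
-/

section

variable {V : Type*}

theorem deg_add (J K : Multiset (Sym2 V)) (v : V) : deg (J + K) v = deg J v + deg K v := by
  simp only [deg, Multiset.filter_add, Multiset.card_add]

theorem mweight_add (w : Sym2 V → ℝ) (J K : Multiset (Sym2 V)) :
    mweight w (J + K) = mweight w J + mweight w K := by
  simp only [mweight, Multiset.map_add, Multiset.sum_add]

theorem min_mweight_le_half (w : Sym2 V → ℝ) (J K : Multiset (Sym2 V)) :
    min (mweight w J) (mweight w K) ≤ mweight w (J + K) / 2 := by
  rw [mweight_add]
  linarith [min_le_left (mweight w J) (mweight w K), min_le_right (mweight w J) (mweight w K)]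

theorem odd_deg_sub_iff {E J : Multiset (Sym2 V)} (hJ : J ≤ E) {v : V} (hE : Even (deg E v)) :
    Odd (deg (E - J) v) ↔ Odd (deg J v) := by
  rw [← tsub_add_cancel_of_le hJ, deg_add] at hE
  exact Nat.even_add'.1 hE

theorem Connects.symm {E : Multiset (Sym2 V)} {a b : V} (h : Connects E a b) : Connects E b a :=
  have : Std.Symm fun x y => s(x, y) ∈ E := ⟨fun _ _ hxy => Sym2.eq_swap ▸ hxy⟩
  Std.Symm.symm (r := Relation.ReflTransGen _) _ _ h

/-- The connected components of a multigraph, as an equivalence relation on its vertices. -/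
def connectsSetoid (E : Multiset (Sym2 V)) : Setoid V where
  r := Connects E
  iseqv := ⟨fun _ => .refl, Connects.symm, .trans⟩

/-- The vector of vertex degrees modulo 2, so that `J` is a `U`-join exactly when
`degParity J` is the indicator function of `U`. -/
noncomputable def degParity : Multiset (Sym2 V) →+ (V → ZMod 2) where
  toFun J v := deg J v
  map_zero' := by ext v; simp [deg]
  map_add' J K := by ext v; simp [deg_add]

theorem degParity_apply (J : Multiset (Sym2 V)) (v : V) : degParity J v = deg J v := rfl

theorem odd_deg_iff_mem_of_degParity_eq_indicator {J : Multiset (Sym2 V)} {U : Set V}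
    (h : degParity J = U.indicator 1) (v : V) : Odd (deg J v) ↔ v ∈ U := by
  rw [← ZMod.natCast_eq_one_iff_odd, ← degParity_apply, h]
  by_cases hv : v ∈ U <;> simp [hv]

-- Pitfall: `deg` counts a loop once, so `degParity {s(a, a)}` is `Pi.single a 1`, not `0`.
theorem degParity_singleton {a b : V} (hab : a ≠ b) :
    degParity {s(a, b)} = Pi.single a 1 + Pi.single b 1 := by
  ext v
  rcases eq_or_ne v a with rfl | hva
  · simp [degParity_apply, deg, Multiset.filter_singleton, hab]
  · rcases eq_or_ne v b with rfl | hvb <;>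
      simp [degParity_apply, deg, Multiset.filter_singleton, *]

theorem degParity_symmDiff (J K : Multiset (Sym2 V)) :
    degParity ((J - K) + (K - J)) = degParity J + degParity K := by
  have hJ : degParity (J - K) + degParity (J ∩ K) = degParity J := by
    rw [← map_add, Multiset.sub_add_inter]
  have hK : degParity (K - J) + degParity (J ∩ K) = degParity K := by
    rw [← map_add, Multiset.inter_comm, Multiset.sub_add_inter]
  rw [← hJ, ← hK, map_add, add_add_add_comm, ZModModule.add_self, add_zero]

/-- The subgroup of `V → ZMod 2` formed by the indicator functions of those sets `U` for which
some submultigraph of `E` is a `U`-join. -/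
def joinSpace (E : Multiset (Sym2 V)) : AddSubgroup (V → ZMod 2) where
  carrier := {x | ∃ J ≤ E, degParity J = x}
  zero_mem' := ⟨0, zero_le, map_zero _⟩
  add_mem' := by
    rintro _ _ ⟨J, hJ, rfl⟩ ⟨K, hK, rfl⟩
    refine ⟨(J - K) + (K - J), ?_, degParity_symmDiff J K⟩
    calc (J - K) + (K - J) ≤ (J - K) + K := by gcongr; exact tsub_le_self
      _ = J ∪ K := (Multiset.union_def J K).symm
      _ ≤ E := Multiset.union_le hJ hK
  neg_mem' := by
    rintro _ ⟨J, hJ, rfl⟩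
    exact ⟨J, hJ, (ZModModule.neg_eq_self _).symm⟩

theorem Connects.single_add_single_mem_joinSpace {E : Multiset (Sym2 V)} {a b : V}
    (h : Connects E a b) : Pi.single a 1 + Pi.single b 1 ∈ joinSpace E := by
  induction h with
  | refl => simpa only [ZModModule.add_self] using zero_mem (joinSpace E)
  | @tail b c _ hbc ih =>
    rcases eq_or_ne b c with rfl | hne
    · exact ih
    have edge : Pi.single b 1 + Pi.single c 1 ∈ joinSpace E :=
      ⟨{s(b, c)}, Multiset.singleton_le.2 hbc, degParity_singleton hne⟩
    simpa only [ZModModule.add_add_add_cancel] using add_mem ih edge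

theorem sum_single_eq_zero_of_even_card_fiber {α β : Type*} {s : Finset α} {f : α → β}
    (h : ∀ a, Even (s.filter (f · = f a)).card) :
    ∑ a ∈ s, (Pi.single (f a) 1 : β → ZMod 2) = 0 := by
  ext b
  simp only [Finset.sum_apply, Pi.single_apply, Finset.sum_boole, Pi.zero_apply,
    ZMod.natCast_eq_zero_iff_even]
  by_cases hb : ∃ a, f a = b
  · obtain ⟨a, rfl⟩ := hb
    simpa only [eq_comm] using h a
  · rw [Finset.filter_false_of_mem fun a _ hba => hb ⟨a, hba.symm⟩]
    simp

theorem indicator_mem_joinSpace {E : Multiset (Sym2 V)} {U : Finset V}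
    (hU : ∀ v, Even (U.filter (Connects E v)).card) :
    (U : Set V).indicator 1 ∈ joinSpace E := by
  let root (u : V) : V := (Quotient.mk (connectsSetoid E) u).out
  have connects_root (u : V) : Connects E u (root u) :=
    Connects.symm (Quotient.mk_out (s := connectsSetoid E) u)
  have root_eq_iff (u v : V) : root u = root v ↔ Connects E v u := by
    rw [Quotient.out_inj, eq_comm]
    exact Quotient.eq
  have sum_root : ∑ u ∈ U, (Pi.single (root u) 1 : V → ZMod 2) = 0 :=
    sum_single_eq_zero_of_even_card_fiber fun v => by simpa only [root_eq_iff] using hU v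
  have indicator_eq : (U : Set V).indicator 1 =
      ∑ u ∈ U, (Pi.single u 1 + Pi.single (root u) 1 : V → ZMod 2) := by
    rw [Finset.sum_add_distrib, sum_root, add_zero]
    ext v
    simp [Set.indicator_apply, Pi.single_apply]
  rw [indicator_eq]
  exact sum_mem fun u _ => (connects_root u).single_add_single_mem_joinSpace

theorem Connects.eq_or_exists_mem {E : Multiset (Sym2 V)} {u v : V} (h : Connects E u v) :
    u = v ∨ ∃ e ∈ E, u ∈ e := by
  rcases h.cases_head with huv | ⟨x, hux, -⟩
  · exact .inl huv
  · exact .inr ⟨s(u, x), hux, Sym2.mem_mk_left u x⟩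

theorem finite_setOf_exists_mem (E : Multiset (Sym2 V)) : {v | ∃ e ∈ E, v ∈ e}.Finite := by
  refine (E.toFinset.biUnion Sym2.toFinset).finite_toSet.subset ?_
  rintro v ⟨e, he, hve⟩
  simpa using ⟨e, he, hve⟩

-- An isolated vertex of `U` would be a component meeting `U` exactly once.
theorem finite_of_even_ncard_component {E : Multiset (Sym2 V)} {U : Set V}
    (hU : ∀ v, Even {u | Connects E v u ∧ u ∈ U}.ncard) : U.Finite := by
  refine (finite_setOf_exists_mem E).subset fun v hv => ?_
  by_contra hisolated
  have component_eq : {u | Connects E v u ∧ u ∈ U} = {v} := by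
    ext u
    refine ⟨fun hu => (hu.1.eq_or_exists_mem.resolve_right hisolated).symm, ?_⟩
    rintro rfl
    exact ⟨.refl, hv⟩
  have := hU v
  rw [component_eq, Set.ncard_singleton] at this
  exact Nat.not_even_one this

theorem exists_le_forall_odd_deg_iff_mem {E : Multiset (Sym2 V)} {U : Set V}
    (hU : ∀ v, Even {u | Connects E v u ∧ u ∈ U}.ncard) :
    ∃ J ≤ E, ∀ v, Odd (deg J v) ↔ v ∈ U := by
  lift U to Finset V using finite_of_even_ncard_component hU
  have even_card (v : V) : Even (U.filter (Connects E v)).card := by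
    rw [← Set.ncard_coe_finset]
    simpa [and_comm] using hU v
  obtain ⟨J, hJ, hparity⟩ := indicator_mem_joinSpace even_card
  exact ⟨J, hJ, odd_deg_iff_mem_of_degParity_eq_indicator hparity⟩

theorem stmt1_general (E : Multiset (Sym2 V)) (U : Set V) (w : Sym2 V → ℝ)
    (heven : ∀ v, Even (deg E v))
    (hcomp : ∀ v : V, Even {u | Connects E v u ∧ u ∈ U}.ncard) :
    ∃ J₁ J₂ : Multiset (Sym2 V), J₁ + J₂ = E ∧
      (∀ v, Odd (deg J₁ v) ↔ v ∈ U) ∧ (∀ v, Odd (deg J₂ v) ↔ v ∈ U) ∧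
      min (mweight w J₁) (mweight w J₂) ≤ mweight w E / 2 := by
  obtain ⟨J, hJ, hodd⟩ := exists_le_forall_odd_deg_iff_mem hcomp
  have hsum : J + (E - J) = E := add_tsub_cancel_of_le hJ
  refine ⟨J, E - J, hsum, hodd, fun v => (odd_deg_sub_iff hJ (heven v)).trans (hodd v), ?_⟩
  simpa only [hsum] using min_mweight_le_half w J (E - J)

end

theorem stmt1 {V : Type*} [Fintype V] (E F : Multiset (Sym2 V)) (U : Set V)
    (w : Sym2 V → ℝ) (hw : ∀ e, 0 ≤ w e)
    (hnd : ∀ e ∈ E, ¬ Sym2.IsDiag e)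
    (heven : ∀ v, Even (deg E v))
    (hU : ∀ v, v ∈ U ↔ Odd (deg F v))
    (hcomp : ∀ v : V, Even {u | Connects E v u ∧ u ∈ U}.ncard) :
    ∃ J₁ J₂ : Multiset (Sym2 V), J₁ + J₂ = E ∧
      (∀ v, Odd (deg J₁ v) ↔ v ∈ U) ∧ (∀ v, Odd (deg J₂ v) ↔ v ∈ U) ∧
      min (mweight w J₁) (mweight w J₂) ≤ mweight w E / 2 :=
  stmt1_general E U w heven hcomp
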